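/- For all positive integers n and k, the representation of the dual symmetric inverse semigroup I*_k on V^{⊗k} is faithful (i.e., distinct elements of I*_k induce distinct linear operators on V^{⊗k}) if and only if n ≥ 2 or k = 1. -/

import Mathlib

/-!
The `(l, i)` entry of `dualOp n k α` records whether the labelling of `K̃` given by `i` and `l` is
constant on the blocks of `α`, so the operator determines which `N`-labellings are constant on the
blocks. With two labels available, the indicator of a single block of `β` is such a labelling for
`β`; if it is also one for `α`, then no block of `α` leaves that block of `β`. Hence equal operators
force equal partitions when `n ≥ 2`. For `k = 1` the semigroup is trivial, while for `n = 1` every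
labelling is constant, so all elements act as the identity, and for `k ≥ 2` the identity partition
and the one-block partition are distinct.
-/

open scoped BigOperators

/-- The k-fold tensor (Kronecker) power of a matrix: the operator induced on the
k-th tensor power of the space with basis indexed by `m`, identified with the
space of functions `(Fin k → m) → ℂ` via the basis v_i = e_{i 0} ⊗ ⋯ ⊗ e_{i (k-1)}. -/
noncomputable def tpow (k : ℕ) {m : Type} [Fintype m] (M : Matrix m m ℂ) :
    Matrix (Fin k → m) (Fin k → m) ℂ :=
  Matrix.of fun l i => ∏ t : Fin k, M (l t) (i t)

/-- The dual symmetric inverse semigroup I*_k: partitions of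
K̃ = {1,…,k} ⊔ {1',…,k'} (encoded as equivalence relations on `Fin k ⊕ Fin k`,
with `Sum.inl` the unprimed and `Sum.inr` the primed elements), each of whose
blocks intersects both K and K'. -/
structure DualSym (k : ℕ) where
  rel : Fin k ⊕ Fin k → Fin k ⊕ Fin k → Prop
  refl : ∀ x, rel x x
  symm : ∀ {x y}, rel x y → rel y x
  trans : ∀ {x y z}, rel x y → rel y z → rel x z
  meetsL : ∀ x, ∃ a, rel x (Sum.inl a)
  meetsR : ∀ x, ∃ b, rel x (Sum.inr b)

open Classical in
/-- The operator on V^{⊗k} attached to α ∈ I*_k: the (l,i) entry is 1 iff the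
labelling of K̃ given by i on K and l on K' is constant on the blocks of α
(so that α(v_i) = v_l when such l exists, and α(v_i) = 0 otherwise). -/
noncomputable def dualOp (n k : ℕ) (α : DualSym k) :
    Matrix (Fin k → Fin n) (Fin k → Fin n) ℂ :=
  Matrix.of fun l i =>
    if ∀ x y, α.rel x y → Sum.elim i l x = Sum.elim i l y then 1 else 0


/-- A labelling `f : K̃ → N` is constant on the blocks of `α`. -/
def Compat {n k : ℕ} (α : DualSym k) (f : Fin k ⊕ Fin k → Fin n) : Prop :=
  ∀ x y, α.rel x y → f x = f y

theorem DualSym.ext_rel {k : ℕ} {α β : DualSym k} (h : ∀ x y, α.rel x y ↔ β.rel x y) : α = β := by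
  have hr : α.rel = β.rel := by
    funext x y
    exact propext (h x y)
  cases α
  cases β
  cases hr
  rfl

theorem compat_iff_of_dualOp_eq {n k : ℕ} {α β : DualSym k} (h : dualOp n k α = dualOp n k β)
    (f : Fin k ⊕ Fin k → Fin n) : Compat α f ↔ Compat β f := by
  classical
  have h1 := congrFun (congrFun h (f ∘ Sum.inr)) (f ∘ Sum.inl)
  have hf : Sum.elim (f ∘ Sum.inl) (f ∘ Sum.inr) = f := Sum.elim_comp_inl_inr f
  simp only [dualOp, Matrix.of_apply, hf] at h1
  unfold Compat
  split_ifs at h1 with ha hb hb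
  · exact iff_of_true ha hb
  · exact absurd h1 one_ne_zero
  · exact absurd h1 zero_ne_one
  · exact iff_of_false ha hb

/-- Testing on the indicator of the `β`-block of a point shows that `α` refines `β`. -/
theorem rel_of_compat {n k : ℕ} (hn : 2 ≤ n) {α β : DualSym k}
    (h : ∀ f : Fin k ⊕ Fin k → Fin n, Compat β f → Compat α f) {x y : Fin k ⊕ Fin k}
    (hxy : α.rel x y) : β.rel x y := by
  classical
  have hβ : Compat β (fun z => if β.rel x z then (⟨1, hn⟩ : Fin n) else ⟨0, by omega⟩) := by
    intro z w hzw
    have : β.rel x z ↔ β.rel x w := ⟨fun hz => β.trans hz hzw, fun hw => β.trans hw (β.symm hzw)⟩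
    simp only [this]
  have hα := h _ hβ x y hxy
  by_contra hne
  simp [β.refl x, hne] at hα

/-- The identity of `I*_k`: the partition with blocks `{a, a'}`. -/
def DualSym.idElt (k : ℕ) : DualSym k where
  rel x y := Sum.elim id id x = Sum.elim id id y
  refl _ := rfl
  symm h := h.symm
  trans h h' := h.trans h'
  meetsL x := ⟨Sum.elim id id x, rfl⟩
  meetsR x := ⟨Sum.elim id id x, rfl⟩

/-- The zero of `I*_k`: the partition with a single block. -/
def DualSym.oneBlock (k : ℕ) (hk : 0 < k) : DualSym k where
  rel _ _ := True
  refl _ := trivial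
  symm _ := trivial
  trans _ _ := trivial
  meetsL _ := ⟨⟨0, hk⟩, trivial⟩
  meetsR _ := ⟨⟨0, hk⟩, trivial⟩

theorem DualSym.rel_of_k_eq_one (α : DualSym 1) (x y : Fin 1 ⊕ Fin 1) : α.rel x y := by
  obtain ⟨a, ha⟩ := α.meetsL x
  obtain ⟨b, hb⟩ := α.meetsL y
  rw [Subsingleton.elim b a] at hb
  exact α.trans ha (α.symm hb)

/-- The representation of I*_k on V^{⊗k} is faithful iff n ≥ 2 or k = 1. -/
theorem dualSym_rep_faithful_iff (n k : ℕ) (hn : 0 < n) (hk : 0 < k) :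
    Function.Injective (dualOp n k) ↔ (2 ≤ n ∨ k = 1) := by
  constructor
  · intro hinj
    by_contra! hcon
    obtain ⟨hn2, hk1⟩ := hcon
    obtain rfl : n = 1 := by omega
    have heq : DualSym.idElt k = DualSym.oneBlock k hk := by
      apply hinj
      ext l i
      -- There is only one label, so both entries are `1`.
      have hall : ∀ (α : DualSym k) x y, α.rel x y → Sum.elim i l x = Sum.elim i l y :=
        fun _ _ _ _ => Subsingleton.elim _ _
      simp only [dualOp, Matrix.of_apply, if_pos (hall _)]
    have hrel : (DualSym.idElt k).rel (Sum.inl ⟨0, hk⟩) (Sum.inl ⟨1, by omega⟩) := by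
      rw [heq]
      trivial
    simp [DualSym.idElt] at hrel
  · rintro (hn2 | rfl) α β h
    · exact DualSym.ext_rel fun x y =>
        ⟨rel_of_compat hn2 fun f => (compat_iff_of_dualOp_eq h f).2,
          rel_of_compat hn2 fun f => (compat_iff_of_dualOp_eq h f).1⟩
    · exact DualSym.ext_rel fun x y => iff_of_true (α.rel_of_k_eq_one x y) (β.rel_of_k_eq_one x y)
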